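/- (Uniform comparison with the fractional Laplacian, C^{1,α} case.) Let 0<α≤1 and 0<s<1 with α<2s<1+α. Let U:ℝ→ℝ be bounded and differentiable, with U' bounded and [U']_{C^{0,α}} := sup_{x≠y}|U'(x)−U'(y)|/|x−y|^α < ∞. Then there is a constant C>0 depending only on s and α (independent of h and U) such that for every h>0, sup_{j∈ℤ} |(-Δ_h)^s(r_hU)_j − (-Δ)^sU(hj)| ≤ C·[U']_{C^{0,α}}·h^{α−2s+1}. -/

import Mathlib

open MeasureTheory

/-- The normalizing constant `A_s = 4^s Γ(1/2+s)/(√π |Γ(-s)|)`, with `|Γ(-s)| = Γ(1-s)/s`. -/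
noncomputable def As (s : ℝ) : ℝ :=
  (4 : ℝ) ^ s * Real.Gamma (1/2 + s) / (Real.sqrt Real.pi * (Real.Gamma (1 - s) / s))

/-- The kernel of the fractional discrete Laplacian on the mesh of size `h`. -/
noncomputable def Ksh (h s : ℝ) (m : ℤ) : ℝ :=
  if m = 0 then 0 else
    As s * (Real.Gamma (|(m : ℝ)| - s) / (h ^ (2 * s) * Real.Gamma (|(m : ℝ)| + 1 + s)))

/-- The fractional discrete Laplacian `(-Δ_h)^s u_j = Σ_{m ≠ j} (u_j - u_m) K_s^h(j-m)`. -/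
noncomputable def fracLap (h s : ℝ) (u : ℤ → ℝ) (j : ℤ) : ℝ :=
  ∑' m : ℤ, (u j - u m) * Ksh h s (j - m)

/-- The continuous fractional Laplacian in its symmetric (second-difference) form:
`(-Δ)^s U(x) = (A_s/2) ∫_ℝ (2U(x) - U(x+z) - U(x-z))/|z|^{1+2s} dz`. -/
noncomputable def cFracLapSym (s : ℝ) (U : ℝ → ℝ) (x : ℝ) : ℝ :=
  As s / 2 * ∫ z : ℝ, (2 * U x - U (x + z) - U (x - z)) / |z| ^ (1 + 2 * s)

/-!
Put `p = 1 + 2s` and let `G t = 2U(x) - U(x + ht) - U(x - ht)`. Pairing `m` with `-m` in the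
discrete operator and rescaling `z = ht` in the continuous one writes both as the factor
`A_s h ^ (-2s)` times, respectively, `∑ G(k) κ(k)` over `k ≥ 1` and `∫ G(t) t ^ (-p)` over `t > 0`,
where `κ(k) = Γ(k - s) / Γ(k + 1 + s)`. Convexity of `log Γ` gives
`(k + s) ^ (-p) ≤ κ(k) ≤ (k - s) ^ (-p)`, so `κ(k)` and `t ^ (-p)` differ by `O(k ^ (-p - 1))` on
the cell `k < t ≤ k + 1`. The mean value theorem makes `|G b - G a|` at most a multiple of
`L h ^ (1 + α) b ^ α (b - a)`. Each cell therefore contributes `O(k ^ (α - p))` times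
`L h ^ (1 + α)`, which is summable because `α < 2s`, and the leftover interval `(0, 1]`, which
contains no mesh point in its interior, contributes `O(1)` times `L h ^ (1 + α)` because
`2s < 1 + α`.
-/

theorem rpow_mul_Gamma_le_Gamma_add {x a : ℝ} (hx : 0 < x) (ha : 1 ≤ a) :
    x ^ a * Real.Gamma x ≤ Real.Gamma (x + a) := by
  have hΓ : 0 < Real.Gamma x := Real.Gamma_pos_of_pos hx
  have hΓa : 0 < Real.Gamma (x + a) := Real.Gamma_pos_of_pos (by linarith)
  have secant : (Real.log (Real.Gamma (x + 1)) - Real.log (Real.Gamma x)) / (x + 1 - x) ≤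
      (Real.log (Real.Gamma (x + a)) - Real.log (Real.Gamma x)) / (x + a - x) :=
    Real.convexOn_log_Gamma.secant_mono (Set.mem_Ioi.2 hx) (Set.mem_Ioi.2 (by linarith))
      (Set.mem_Ioi.2 (by linarith)) (by linarith) (by linarith) (by linarith)
  rw [Real.Gamma_add_one hx.ne', Real.log_mul hx.ne' hΓ.ne', add_sub_cancel_right,
    add_sub_cancel_left, div_one, add_sub_cancel_left, le_div_iff₀ (by linarith)] at secant
  rw [← Real.log_le_log_iff (by positivity) hΓa, Real.log_mul (by positivity) hΓ.ne',
    Real.log_rpow hx]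
  linarith

theorem Gamma_add_le_rpow_mul_Gamma {x a : ℝ} (hx : 0 < x) (ha : 1 ≤ a) :
    Real.Gamma (x + a) ≤ (x + a - 1) ^ a * Real.Gamma x := by
  have hΓ : 0 < Real.Gamma x := Real.Gamma_pos_of_pos hx
  have hΓa : 0 < Real.Gamma (x + a) := Real.Gamma_pos_of_pos (by linarith)
  have hy : 0 < x + a - 1 := by linarith
  have hΓy : 0 < Real.Gamma (x + a - 1) := Real.Gamma_pos_of_pos hy
  have hlog : Real.log (Real.Gamma (x + a)) =
      Real.log (x + a - 1) + Real.log (Real.Gamma (x + a - 1)) := by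
    rw [← Real.log_mul hy.ne' hΓy.ne', ← Real.Gamma_add_one hy.ne', sub_add_cancel]
  have secant : (Real.log (Real.Gamma x) - Real.log (Real.Gamma (x + a))) / (x - (x + a)) ≤
      (Real.log (Real.Gamma (x + a - 1)) - Real.log (Real.Gamma (x + a))) /
        (x + a - 1 - (x + a)) :=
    Real.convexOn_log_Gamma.secant_mono (Set.mem_Ioi.2 (by linarith)) (Set.mem_Ioi.2 hx)
      (Set.mem_Ioi.2 hy) (by linarith) (by linarith) (by linarith)
  rw [sub_add_cancel_left, sub_sub_cancel_left, div_neg, div_neg, div_one, neg_le_neg_iff,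
    le_div_iff₀ (by linarith)] at secant
  rw [← Real.log_le_log_iff hΓa (by positivity), Real.log_mul (by positivity) hΓ.ne',
    Real.log_rpow hy]
  rw [hlog] at secant ⊢
  linarith

theorem rpow_neg_sub_rpow_neg_le {a b p : ℝ} (ha : 0 < a) (hab : a ≤ b) (hp : 0 ≤ p) :
    a ^ (-p) - b ^ (-p) ≤ p * a ^ (-(p + 1)) * (b - a) := by
  have hderiv : ∀ x ∈ Set.Icc a b,
      HasDerivWithinAt (fun x : ℝ => x ^ (-p)) (-p * x ^ (-p - 1)) (Set.Icc a b) x :=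
    fun x hx => (Real.hasDerivAt_rpow_const (.inl (ha.trans_le hx.1).ne')).hasDerivWithinAt
  have hbound : ∀ x ∈ Set.Icc a b, ‖-p * x ^ (-p - 1)‖ ≤ p * a ^ (-(p + 1)) := fun x hx => by
    have hx0 : 0 < x := ha.trans_le hx.1
    rw [neg_mul, norm_neg, Real.norm_of_nonneg (by positivity), neg_add']
    gcongr ?_ * ?_
    exact Real.rpow_le_rpow_of_nonpos ha hx.1 (by linarith)
  have hmvt := (convex_Icc a b).norm_image_sub_le_of_norm_hasDerivWithin_le hderiv hbound
    (Set.left_mem_Icc.2 hab) (Set.right_mem_Icc.2 hab)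
  rw [norm_sub_rev, Real.norm_of_nonneg (sub_nonneg.2 hab)] at hmvt
  exact (le_abs_self _).trans hmvt

theorem summable_nat_add_one_rpow {p : ℝ} (hp : p < -1) :
    Summable fun n : ℕ => ((n : ℝ) + 1) ^ p := by
  simpa using (summable_nat_add_iff 1).2 (Real.summable_nat_rpow.2 hp)

theorem iUnion_Ioc_add_natCast {R : Type*} [Ring R] [LinearOrder R] [IsStrictOrderedRing R]
    [Archimedean R] (c : R) : ⋃ n : ℕ, Set.Ioc (c + n) (c + n + 1) = Set.Ioi c := by
  have hunbounded : ¬BddAbove (Set.range fun n : ℕ => c + n) :=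
    Filter.not_bddAbove_of_tendsto_atTop
      (Filter.tendsto_atTop_add_const_left _ c tendsto_natCast_atTop_atTop)
  simpa [add_assoc] using iUnion_Ioc_map_succ_eq_Ioi (f := fun n : ℕ => c + n) (by simp) hunbounded

theorem abs_tsum_sub_integral_Ioi_le {f : ℝ → ℝ} {c : ℝ} {a e : ℕ → ℝ}
    (hf : IntegrableOn f (Set.Ioi c)) (he : Summable e)
    (hae : ∀ n : ℕ, ∀ t ∈ Set.Ioc (c + n) (c + n + 1), |a n - f t| ≤ e n) :
    |∑' n, a n - ∫ t in Set.Ioi c, f t| ≤ ∑' n, e n := by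
  have hdisj : Pairwise (Function.onFun Disjoint fun n : ℕ => Set.Ioc (c + n) (c + n + 1)) := by
    have hmono : Monotone fun n : ℕ => c + n := fun m n hmn => by simpa using hmn
    simpa [add_assoc] using hmono.pairwise_disjoint_on_Ioc_succ
  have hfsum : HasSum (fun n : ℕ => ∫ t in Set.Ioc (c + n) (c + n + 1), f t)
      (∫ t in Set.Ioi c, f t) := by
    rw [← iUnion_Ioc_add_natCast c] at hf ⊢
    exact hasSum_integral_iUnion (fun _ => measurableSet_Ioc) hdisj hf
  have hcell (n : ℕ) : ‖a n - ∫ t in Set.Ioc (c + n) (c + n + 1), f t‖ ≤ e n := by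
    have hvol : volume.real (Set.Ioc (c + n) (c + n + 1)) = 1 := by simp
    have hfn : IntegrableOn f (Set.Ioc (c + n) (c + n + 1)) :=
      hf.mono_set (iUnion_Ioc_add_natCast c ▸ Set.subset_iUnion_of_subset n subset_rfl)
    calc ‖a n - ∫ t in Set.Ioc (c + n) (c + n + 1), f t‖
        = ‖∫ t in Set.Ioc (c + n) (c + n + 1), (a n - f t)‖ := by
          rw [integral_sub (integrable_const _) hfn, setIntegral_const, hvol, one_smul]
      _ ≤ e n * volume.real (Set.Ioc (c + n) (c + n + 1)) :=
          norm_setIntegral_le_of_norm_le_const (by simp) (hae n)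
      _ = e n := by rw [hvol, mul_one]
  have hdiff := (Summable.of_norm_bounded he hcell).hasSum
  have hasum := hdiff.add hfsum
  simp only [sub_add_cancel] at hasum
  rw [hasum.tsum_eq, add_sub_cancel_right, ← Real.norm_eq_abs]
  exact tsum_of_norm_bounded he.hasSum hcell

/-- The kernel of the fractional discrete Laplacian for mesh size `1`, without the factor `A_s`, as
a function of a real distance `k > s`. -/
noncomputable def unitKernel (s k : ℝ) : ℝ := Real.Gamma (k - s) / Real.Gamma (k + 1 + s)

section UnitKernel

variable {s k : ℝ}

theorem rpow_neg_le_unitKernel (hs : 0 ≤ s) (hk : s < k) :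
    (k + s) ^ (-(1 + 2 * s)) ≤ unitKernel s k := by
  have hΓ := Gamma_add_le_rpow_mul_Gamma (sub_pos.2 hk) (show 1 ≤ 1 + 2 * s by linarith)
  have hks : 0 < k + s := by linarith
  have hpos : 0 < Real.Gamma (k + 1 + s) := Real.Gamma_pos_of_pos (by linarith)
  rw [unitKernel, le_div_iff₀ hpos, Real.rpow_neg hks.le, inv_mul_le_iff₀ (by positivity)]
  rwa [show k - s + (1 + 2 * s) = k + 1 + s by ring, show k + 1 + s - 1 = k + s by ring] at hΓ

theorem unitKernel_le_rpow_neg (hs : 0 ≤ s) (hk : s < k) :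
    unitKernel s k ≤ (k - s) ^ (-(1 + 2 * s)) := by
  have hks : 0 < k - s := sub_pos.2 hk
  have hΓ := rpow_mul_Gamma_le_Gamma_add hks (show 1 ≤ 1 + 2 * s by linarith)
  have hpos : 0 < Real.Gamma (k + 1 + s) := Real.Gamma_pos_of_pos (by linarith)
  rw [unitKernel, div_le_iff₀ hpos, Real.rpow_neg hks.le, le_inv_mul_iff₀ (by positivity)]
  rwa [show k - s + (1 + 2 * s) = k + 1 + s by ring] at hΓ

theorem sub_rpow_neg_le_mul_rpow_neg {q : ℝ} (hs0 : 0 ≤ s) (hs1 : s < 1) (hk : 1 ≤ k) (hq : 0 ≤ q) :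
    (k - s) ^ (-q) ≤ (1 - s) ^ (-q) * k ^ (-q) := by
  have hs : 0 < 1 - s := sub_pos.2 hs1
  rw [← Real.mul_rpow hs.le (by linarith)]
  exact Real.rpow_le_rpow_of_nonpos (by positivity) (by nlinarith) (by linarith)

theorem exists_abs_unitKernel_sub_rpow_neg_le (hs0 : 0 ≤ s) (hs1 : s < 1) :
    ∃ C, 0 ≤ C ∧ ∀ k t : ℝ, 1 ≤ k → k ≤ t → t ≤ k + 1 →
      |unitKernel s k - t ^ (-(1 + 2 * s))| ≤ C * k ^ (-(1 + 2 * s + 1)) := by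
  have hs : 0 < 1 - s := sub_pos.2 hs1
  refine ⟨(1 + 2 * s) * (1 - s) ^ (-(1 + 2 * s + 1)) * (1 + s), by positivity, ?_⟩
  intro k t hk hkt htk
  have hks : 0 < k - s := by linarith
  have hanti {x y : ℝ} (hx : 0 < x) (hxy : x ≤ y) : y ^ (-(1 + 2 * s)) ≤ x ^ (-(1 + 2 * s)) :=
    Real.rpow_le_rpow_of_nonpos hx hxy (by linarith)
  calc |unitKernel s k - t ^ (-(1 + 2 * s))|
      ≤ (k - s) ^ (-(1 + 2 * s)) - (k + 1) ^ (-(1 + 2 * s)) :=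
        abs_sub_le_of_le_of_le
          ((hanti (by linarith) (by linarith)).trans (rpow_neg_le_unitKernel hs0 (by linarith)))
          (unitKernel_le_rpow_neg hs0 (by linarith))
          (hanti (by linarith) htk) (hanti hks (by linarith))
    _ ≤ (1 + 2 * s) * (k - s) ^ (-(1 + 2 * s + 1)) * (k + 1 - (k - s)) :=
        rpow_neg_sub_rpow_neg_le hks (by linarith) (by linarith)
    _ ≤ (1 + 2 * s) * ((1 - s) ^ (-(1 + 2 * s + 1)) * k ^ (-(1 + 2 * s + 1))) *
          (k + 1 - (k - s)) := by
        gcongr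
        · linarith
        · exact sub_rpow_neg_le_mul_rpow_neg hs0 hs1 hk (by linarith)
    _ = (1 + 2 * s) * (1 - s) ^ (-(1 + 2 * s + 1)) * (1 + s) * k ^ (-(1 + 2 * s + 1)) := by ring

theorem summable_mul_unitKernel (hs0 : 0 < s) (hs1 : s < 1) {g : ℕ → ℝ} {M : ℝ}
    (hg : ∀ n, |g n| ≤ M) : Summable fun n : ℕ => g n * unitKernel s (n + 1) := by
  have hM : 0 ≤ M := (abs_nonneg _).trans (hg 0)
  have hmajorant := (summable_nat_add_one_rpow (p := -(1 + 2 * s)) (by linarith)).mul_left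
    (M * (1 - s) ^ (-(1 + 2 * s)))
  refine Summable.of_norm_bounded hmajorant fun n => ?_
  have hn : (1 : ℝ) ≤ n + 1 := by simp
  have hκ0 : 0 ≤ unitKernel s (n + 1) :=
    (by positivity : (0 : ℝ) ≤ (n + 1 + s) ^ (-(1 + 2 * s))).trans
      (rpow_neg_le_unitKernel hs0.le (by linarith))
  have hκ : unitKernel s (n + 1) ≤ (1 - s) ^ (-(1 + 2 * s)) * (n + 1 : ℝ) ^ (-(1 + 2 * s)) :=
    (unitKernel_le_rpow_neg hs0.le (by linarith)).trans
      (sub_rpow_neg_le_mul_rpow_neg hs0.le hs1 hn (by linarith))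
  rw [norm_mul, Real.norm_eq_abs, Real.norm_of_nonneg hκ0, mul_assoc]
  gcongr
  exact hg n

end UnitKernel

section RadialComparison

variable {G : ℝ → ℝ} {B M α p r : ℝ}

theorem norm_mul_rpow_neg_le {t : ℝ} (hG : |G t| ≤ B * t ^ r) (ht : 0 < t) :
    ‖G t * t ^ (-p)‖ ≤ B * t ^ (r - p) := by
  rw [norm_mul, Real.norm_eq_abs, Real.norm_of_nonneg (by positivity), sub_eq_add_neg,
    Real.rpow_add ht, ← mul_assoc]
  gcongr

theorem integrableOn_Ioc_zero_one_rpow (hr : -1 < r) :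
    IntegrableOn (fun t : ℝ => t ^ r) (Set.Ioc 0 1) :=
  (intervalIntegrable_iff_integrableOn_Ioc_of_le zero_le_one).1
    (intervalIntegral.intervalIntegrable_rpow' hr)

theorem integrableOn_Ioc_zero_one_mul_rpow_neg (hGm : Measurable G) (hpr : p < r + 1)
    (hG : ∀ t, 0 < t → |G t| ≤ B * t ^ r) :
    IntegrableOn (fun t => G t * t ^ (-p)) (Set.Ioc 0 1) :=
  Integrable.mono' ((integrableOn_Ioc_zero_one_rpow (by linarith)).const_mul B)
    (hGm.mul (measurable_id.pow_const _)).aestronglyMeasurable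
    (ae_restrict_of_forall_mem measurableSet_Ioc fun t ht =>
      norm_mul_rpow_neg_le (hG t ht.1) ht.1)

theorem abs_integral_Ioc_zero_one_mul_rpow_neg_le (hpr : p < r + 1)
    (hG : ∀ t, 0 < t → |G t| ≤ B * t ^ r) :
    |∫ t in Set.Ioc 0 1, G t * t ^ (-p)| ≤ B / (r - p + 1) :=
  calc |∫ t in Set.Ioc 0 1, G t * t ^ (-p)|
      ≤ ∫ t in Set.Ioc 0 1, B * t ^ (r - p) :=
        norm_integral_le_of_norm_le
          ((integrableOn_Ioc_zero_one_rpow (by linarith)).const_mul B)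
          (ae_restrict_of_forall_mem measurableSet_Ioc fun t ht =>
            norm_mul_rpow_neg_le (hG t ht.1) ht.1)
    _ = B / (r - p + 1) := by
        rw [integral_const_mul, ← intervalIntegral.integral_of_le zero_le_one,
          integral_rpow (.inl (by linarith)), Real.one_rpow, Real.zero_rpow (by linarith),
          sub_zero, mul_one_div]

theorem integrableOn_Ioi_one_mul_rpow_neg (hGm : Measurable G) (hp : 1 < p)
    (hM : ∀ t, |G t| ≤ M) : IntegrableOn (fun t => G t * t ^ (-p)) (Set.Ioi 1) :=
  (integrableOn_Ioi_rpow_of_lt (neg_lt_neg hp) one_pos).bdd_mul (c := M)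
    hGm.aestronglyMeasurable (.of_forall hM)

theorem abs_mul_sub_mul_rpow_neg_le {C κ k t : ℝ} (hαp : α ≤ p) (hG0 : G 0 = 0)
    (hG : ∀ a b, 0 ≤ a → a ≤ b → |G b - G a| ≤ B * b ^ α * (b - a))
    (hk : 0 < k) (hkt : k ≤ t) (htk : t ≤ k + 1)
    (hκ : |κ - t ^ (-p)| ≤ C * k ^ (-(p + 1))) :
    |G k * κ - G t * t ^ (-p)| ≤ (C + 1) * B * k ^ (α - p) := by
  have ht : 0 < t := hk.trans_le hkt
  have hB : 0 ≤ B := by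
    simpa using (abs_nonneg _).trans (hG 0 1 le_rfl zero_le_one)
  have hkernel : |G k * (κ - t ^ (-p))| ≤ C * B * k ^ (α - p) := by
    have hGk : |G k| ≤ B * k ^ α * k := by simpa [hG0] using hG 0 k le_rfl hk.le
    have hexp : k ^ (α - p) = k ^ α * (k * k ^ (-(p + 1))) := by
      rw [mul_comm k, ← Real.rpow_add_one hk.ne', ← Real.rpow_add hk]
      ring_nf
    calc |G k * (κ - t ^ (-p))| ≤ (B * k ^ α * k) * (C * k ^ (-(p + 1))) := by
          rw [abs_mul]
          gcongr
      _ = C * B * k ^ (α - p) := by rw [hexp]; ring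
  have hincrement : |(G t - G k) * t ^ (-p)| ≤ B * k ^ (α - p) :=
    calc |(G t - G k) * t ^ (-p)| ≤ (B * t ^ α * 1) * t ^ (-p) := by
          rw [abs_mul, abs_of_pos (by positivity : 0 < t ^ (-p))]
          gcongr
          exact (hG k t hk.le hkt).trans (by gcongr; linarith)
      _ = B * t ^ (α - p) := by rw [sub_eq_add_neg, Real.rpow_add ht]; ring
      _ ≤ B * k ^ (α - p) := by
          gcongr ?_ * ?_
          exact Real.rpow_le_rpow_of_nonpos hk hkt (sub_nonpos.2 hαp)
  calc |G k * κ - G t * t ^ (-p)|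
      = |G k * (κ - t ^ (-p)) - (G t - G k) * t ^ (-p)| := by ring_nf
    _ ≤ |G k * (κ - t ^ (-p))| + |(G t - G k) * t ^ (-p)| := abs_sub _ _
    _ ≤ (C + 1) * B * k ^ (α - p) := by linarith

theorem exists_abs_tsum_sub_integral_le {s : ℝ} (hs0 : 0 < s) (hs1 : s < 1) (hl : α < 2 * s)
    (hr : 2 * s < 1 + α) :
    ∃ C : ℝ, 0 < C ∧ ∀ (G : ℝ → ℝ) (B M : ℝ), Measurable G → (∀ t, |G t| ≤ M) → G 0 = 0 →
      (∀ a b, 0 ≤ a → a ≤ b → |G b - G a| ≤ B * b ^ α * (b - a)) →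
      |∑' n : ℕ, G (n + 1) * unitKernel s (n + 1) -
        ∫ t in Set.Ioi 0, G t * t ^ (-(1 + 2 * s))| ≤ C * B := by
  obtain ⟨C₀, hC₀, hkernel⟩ := exists_abs_unitKernel_sub_rpow_neg_le hs0.le hs1
  have hsummable := summable_nat_add_one_rpow (p := α - (1 + 2 * s)) (by linarith)
  set p := 1 + 2 * s
  set S := ∑' n : ℕ, ((n : ℝ) + 1) ^ (α - p)
  have hS : 0 ≤ S := tsum_nonneg fun n => by positivity
  have hgap : 0 < 1 + α - p + 1 := by linarith
  refine ⟨(C₀ + 1) * S + 1 / (1 + α - p + 1), by positivity, fun G B M hGm hM hG0 hG => ?_⟩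
  have hgrowth : ∀ t, 0 < t → |G t| ≤ B * t ^ (1 + α) := fun t ht => by
    simpa [hG0, add_comm 1 α, Real.rpow_add_one ht.ne', mul_assoc] using hG 0 t le_rfl ht.le
  have hnear : |∫ t in Set.Ioc 0 1, G t * t ^ (-p)| ≤ B / (1 + α - p + 1) :=
    abs_integral_Ioc_zero_one_mul_rpow_neg_le (by linarith) hgrowth
  have hnear_int : IntegrableOn (fun t => G t * t ^ (-p)) (Set.Ioc 0 1) :=
    integrableOn_Ioc_zero_one_mul_rpow_neg hGm (by linarith) hgrowth
  have hfar_int : IntegrableOn (fun t => G t * t ^ (-p)) (Set.Ioi 1) :=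
    integrableOn_Ioi_one_mul_rpow_neg hGm (by linarith) hM
  have hfar : |∑' n : ℕ, G (n + 1) * unitKernel s (n + 1) -
      ∫ t in Set.Ioi 1, G t * t ^ (-p)| ≤ (C₀ + 1) * B * S := by
    rw [← tsum_mul_left]
    refine abs_tsum_sub_integral_Ioi_le hfar_int (hsummable.mul_left _) fun n t ht => ?_
    rw [add_comm (1 : ℝ) n] at ht
    exact abs_mul_sub_mul_rpow_neg_le (by linarith) hG0 hG (by positivity) ht.1.le ht.2
      (hkernel _ t (by simp) ht.1.le ht.2)
  rw [← Set.Ioc_union_Ioi_eq_Ioi zero_le_one, setIntegral_union (Set.Ioc_disjoint_Ioi le_rfl)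
    measurableSet_Ioi hnear_int hfar_int, ← sub_sub, sub_right_comm]
  calc _ ≤ (C₀ + 1) * B * S + B / (1 + α - p + 1) :=
        (abs_sub _ _).trans (add_le_add hfar hnear)
    _ = ((C₀ + 1) * S + 1 / (1 + α - p + 1)) * B := by ring

end RadialComparison

/-- The centred second difference of `U` at `x` with step `t`, with the sign it has in `(-Δ)^s`, so
that it is nonnegative for concave `U`. -/
def secondDiff (U : ℝ → ℝ) (x t : ℝ) : ℝ := 2 * U x - U (x + t) - U (x - t)

section SecondDifference

variable {h L M α x : ℝ} {U U' : ℝ → ℝ}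

theorem secondDiff_zero (U : ℝ → ℝ) (x : ℝ) : secondDiff U x 0 = 0 := by
  simp only [secondDiff, add_zero, sub_zero]
  ring

theorem secondDiff_abs (U : ℝ → ℝ) (x t : ℝ) : secondDiff U x |t| = secondDiff U x t := by
  rcases abs_choice t with ht | ht <;> rw [ht]
  simp only [secondDiff, sub_neg_eq_add, ← sub_eq_add_neg]
  ring

theorem abs_secondDiff_le (hM : ∀ x, |U x| ≤ M) (x t : ℝ) : |secondDiff U x t| ≤ 4 * M := by
  have hx := abs_le.1 (hM x)
  have hadd := abs_le.1 (hM (x + t))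
  have hsub := abs_le.1 (hM (x - t))
  exact abs_le.2 ⟨by unfold secondDiff; linarith, by unfold secondDiff; linarith⟩

theorem hasDerivAt_secondDiff (hU : ∀ x, HasDerivAt U (U' x) x) (x t : ℝ) :
    HasDerivAt (secondDiff U x) (U' (x - t) - U' (x + t)) t := by
  have hadd := (hU (x + t)).comp_const_add x t
  have hsub := (hU (x - t)).comp_const_sub x t
  exact ((hadd.const_sub (2 * U x)).sub hsub).congr_deriv (by ring)

theorem nonneg_of_abs_sub_le_mul_abs_rpow (hU' : ∀ z, |U' (x + z) - U' (x - z)| ≤ L * |2 * z| ^ α) :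
    0 ≤ L := by
  simpa using (abs_nonneg _).trans (hU' (1 / 2))

theorem abs_secondDiff_sub_secondDiff_le (hα : 0 ≤ α) (hU : ∀ x, HasDerivAt U (U' x) x)
    (hU' : ∀ z, |U' (x + z) - U' (x - z)| ≤ L * |2 * z| ^ α) {a b : ℝ} (ha : 0 ≤ a)
    (hab : a ≤ b) :
    |secondDiff U x b - secondDiff U x a| ≤ L * (2 * b) ^ α * (b - a) := by
  have hL : 0 ≤ L := nonneg_of_abs_sub_le_mul_abs_rpow hU'
  have hbound : ∀ t ∈ Set.Icc a b, ‖U' (x - t) - U' (x + t)‖ ≤ L * (2 * b) ^ α := fun t ht => by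
    have ht0 : 0 ≤ t := ha.trans ht.1
    rw [norm_sub_rev]
    refine (hU' t).trans ?_
    rw [abs_of_nonneg (by positivity)]
    gcongr
    exact ht.2
  have hmvt := (convex_Icc a b).norm_image_sub_le_of_norm_hasDerivWithin_le
    (fun t _ => (hasDerivAt_secondDiff hU x t).hasDerivWithinAt) hbound
    (Set.left_mem_Icc.2 hab) (Set.right_mem_Icc.2 hab)
  rwa [Real.norm_eq_abs, Real.norm_of_nonneg (sub_nonneg.2 hab)] at hmvt

theorem abs_secondDiff_mul_sub_secondDiff_mul_le (hh : 0 ≤ h) (hα : 0 ≤ α)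
    (hU : ∀ x, HasDerivAt U (U' x) x)
    (hU' : ∀ z, |U' (x + z) - U' (x - z)| ≤ L * |2 * z| ^ α) {a b : ℝ} (ha : 0 ≤ a)
    (hab : a ≤ b) :
    |secondDiff U x (h * b) - secondDiff U x (h * a)| ≤
      2 ^ α * L * h ^ (1 + α) * b ^ α * (b - a) := by
  have hb : 0 ≤ b := ha.trans hab
  calc |secondDiff U x (h * b) - secondDiff U x (h * a)|
      ≤ L * (2 * (h * b)) ^ α * (h * b - h * a) :=
        abs_secondDiff_sub_secondDiff_le hα hU hU' (by positivity) (by gcongr)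
    _ = 2 ^ α * L * h ^ (1 + α) * b ^ α * (b - a) := by
        rw [Real.mul_rpow zero_le_two (by positivity), Real.mul_rpow hh hb,
          Real.rpow_add' hh (by positivity), Real.rpow_one]
        ring

end SecondDifference

section Operators

variable {h s M : ℝ} {U : ℝ → ℝ}

theorem Ksh_neg (h s : ℝ) (m : ℤ) : Ksh h s (-m) = Ksh h s m := by
  simp [Ksh]

theorem Ksh_natCast_add_one (hh : 0 < h) (s : ℝ) (n : ℕ) :
    Ksh h s (n + 1) = As s * h ^ (-(2 * s)) * unitKernel s (n + 1) := by
  have hne : (n : ℤ) + 1 ≠ 0 := by omega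
  have habs : |(((n : ℤ) + 1 : ℤ) : ℝ)| = n + 1 := by
    push_cast
    exact abs_of_pos (by positivity)
  rw [Ksh, if_neg hne, habs, Real.rpow_neg hh.le, unitKernel]
  field_simp

theorem fracLap_eq_tsum_natCast {u : ℤ → ℝ} (hh : 0 < h) (hs0 : 0 < s) (hs1 : s < 1)
    (hu : ∀ m, |u m| ≤ M) (j : ℤ) :
    fracLap h s u j =
      ∑' n : ℕ, (2 * u j - u (j + (n + 1)) - u (j - (n + 1))) * Ksh h s (n + 1) := by
  have hsummable (v : ℕ → ℤ) : Summable fun n : ℕ => (u j - u (v n)) * Ksh h s (n + 1) := by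
    have hdiff (n : ℕ) : |u j - u (v n)| ≤ M + M :=
      (abs_sub _ _).trans (add_le_add (hu j) (hu (v n)))
    simpa only [Ksh_natCast_add_one hh, mul_left_comm] using
      (summable_mul_unitKernel hs0 hs1 hdiff).mul_left (As s * h ^ (-(2 * s)))
  have hright := hsummable fun n => j + (n + 1)
  have hleft := hsummable fun n => j - (n + 1)
  set f : ℤ → ℝ := fun m => (u j - u (j - m)) * Ksh h s m with hf
  have hf_neg (n : ℕ) : f (-(n + 1)) = (u j - u (j + (n + 1))) * Ksh h s (n + 1) := by
    simp only [hf, Ksh_neg, sub_neg_eq_add]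
  calc fracLap h s u j
      = ∑' m : ℤ, f m := by
        rw [fracLap, ← (Equiv.subLeft j).tsum_eq]
        simp only [hf, Equiv.subLeft_apply, sub_sub_cancel]
    _ = ∑' n : ℕ, f (n + 1) + f 0 + ∑' n : ℕ, f (-(n + 1)) :=
        tsum_of_add_one_of_neg_add_one hleft (by simpa only [hf_neg] using hright)
    _ = ∑' n : ℕ, (f (n + 1) + f (-(n + 1))) := by
        simp only [hf_neg]
        rw [show f 0 = 0 by simp [hf], add_zero, hleft.tsum_add hright]
    _ = _ := by
        simp only [hf_neg]
        exact tsum_congr fun n => by ring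

theorem fracLap_eq_tsum_secondDiff (hh : 0 < h) (hs0 : 0 < s) (hs1 : s < 1)
    (hM : ∀ x, |U x| ≤ M) (j : ℤ) :
    fracLap h s (fun m : ℤ => U (h * m)) j = As s * h ^ (-(2 * s)) *
      ∑' n : ℕ, secondDiff U (h * j) (h * (n + 1)) * unitKernel s (n + 1) := by
  rw [fracLap_eq_tsum_natCast hh hs0 hs1 (fun m => hM (h * m)) j, ← tsum_mul_left]
  refine tsum_congr fun n => ?_
  rw [Ksh_natCast_add_one hh, secondDiff]
  push_cast
  rw [mul_add h (j : ℝ), mul_sub h (j : ℝ)]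
  ring

theorem cFracLapSym_eq_integral_secondDiff (hh : 0 < h) (s : ℝ) (U : ℝ → ℝ) (x : ℝ) :
    cFracLapSym s U x = As s * h ^ (-(2 * s)) *
      ∫ t in Set.Ioi 0, secondDiff U x (h * t) * t ^ (-(1 + 2 * s)) := by
  set f : ℝ → ℝ := fun z => secondDiff U x z * z ^ (-(1 + 2 * s)) with hf
  have hscale : ∫ t in Set.Ioi 0, f t = h ^ (-(2 * s)) *
      ∫ t in Set.Ioi 0, secondDiff U x (h * t) * t ^ (-(1 + 2 * s)) := by
    rw [← mul_zero h, ← integral_comp_mul_left_Ioi' f 0 hh, mul_zero, smul_eq_mul,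
      ← integral_const_mul, ← integral_const_mul]
    refine setIntegral_congr_fun measurableSet_Ioi fun t ht => ?_
    have hrpow : h ^ (-(2 * s)) = h * h ^ (-(1 + 2 * s)) := by
      rw [mul_comm h, ← Real.rpow_add_one hh.ne']
      ring_nf
    simp only [hf, Real.mul_rpow hh.le (Set.mem_Ioi.1 ht).le, hrpow]
    ring
  have heven : ∀ z : ℝ, (2 * U x - U (x + z) - U (x - z)) / |z| ^ (1 + 2 * s) = f |z| := fun z => by
    rw [hf]
    dsimp only
    rw [secondDiff_abs, Real.rpow_neg (abs_nonneg z), div_eq_mul_inv, secondDiff]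
  simp only [cFracLapSym, heven]
  rw [integral_comp_abs, hscale]
  ring

end Operators

theorem uniform_comparison_C1alpha_general (α s : ℝ) (hα : 0 ≤ α) (hs : s < 1)
    (hl : α < 2 * s) (hr : 2 * s < 1 + α) :
    ∃ C : ℝ, 0 < C ∧ ∀ h : ℝ, 0 < h → ∀ U U' : ℝ → ℝ, ∀ M L : ℝ,
      (∀ x : ℝ, |U x| ≤ M) →
      (∀ x : ℝ, HasDerivAt U (U' x) x) →
      ∀ j : ℤ,
        (∀ z : ℝ, |U' (h * j + z) - U' (h * j - z)| ≤ L * |2 * z| ^ α) →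
        |fracLap h s (fun m : ℤ => U (h * m)) j - cFracLapSym s U (h * j)| ≤
          C * L * h ^ (α - 2 * s + 1) := by
  have hs0 : 0 < s := by linarith
  obtain ⟨C, hC, hcompare⟩ := exists_abs_tsum_sub_integral_le hs0 hs hl hr
  refine ⟨|As s| * C * 2 ^ α + 1, by positivity, fun h hh U U' M L hM hU j hU' => ?_⟩
  have hL : 0 ≤ L := nonneg_of_abs_sub_le_mul_abs_rpow hU'
  have hUm : Measurable U := (continuous_iff_continuousAt.2 fun x => (hU x).continuousAt).measurable
  have hsum := hcompare (fun t => secondDiff U (h * j) (h * t)) _ _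
    (by unfold secondDiff; fun_prop) (fun t => abs_secondDiff_le hM _ _) (by simp [secondDiff_zero])
    fun a b => abs_secondDiff_mul_sub_secondDiff_mul_le hh.le hα hU hU'
  have hexp : h ^ (α - 2 * s + 1) = h ^ (-(2 * s)) * h ^ (1 + α) := by
    rw [← Real.rpow_add hh]
    ring_nf
  rw [fracLap_eq_tsum_secondDiff hh hs0 hs hM, cFracLapSym_eq_integral_secondDiff hh,
    ← mul_sub, abs_mul, abs_mul, abs_of_pos (by positivity : 0 < h ^ (-(2 * s)))]
  calc _ ≤ |As s| * h ^ (-(2 * s)) * (C * (2 ^ α * L * h ^ (1 + α))) := by gcongr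
    _ = |As s| * C * 2 ^ α * L * h ^ (α - 2 * s + 1) := by rw [hexp]; ring
    _ ≤ (|As s| * C * 2 ^ α + 1) * L * h ^ (α - 2 * s + 1) := by gcongr; linarith

/-- Uniform comparison of the fractional discrete Laplacian with the fractional Laplacian,
for bounded `C^{1,α}` functions with `α < 2s < 1 + α`. -/
theorem uniform_comparison_C1alpha (α s : ℝ) (hα0 : 0 < α) (hα1 : α ≤ 1)
    (hs0 : 0 < s) (hs1 : s < 1) (hl : α < 2 * s) (hr : 2 * s < 1 + α) :
    ∃ C : ℝ, 0 < C ∧ ∀ h : ℝ, 0 < h → ∀ U U' : ℝ → ℝ, ∀ M M' L : ℝ, 0 ≤ L →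
      (∀ x : ℝ, |U x| ≤ M) →
      (∀ x : ℝ, HasDerivAt U (U' x) x) →
      (∀ x : ℝ, |U' x| ≤ M') →
      (∀ x y : ℝ, |U' x - U' y| ≤ L * |x - y| ^ α) →
      ∀ j : ℤ,
        |fracLap h s (fun m : ℤ => U (h * m)) j - cFracLapSym s U (h * j)| ≤
          C * L * h ^ (α - 2 * s + 1) := by
  obtain ⟨C, hC, hcompare⟩ := uniform_comparison_C1alpha_general α s hα0.le hs1 hl hr
  exact ⟨C, hC, fun h hh U U' M _ L _ hM hU _ hU' j => hcompare h hh U U' M L hM hU j fun z => by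
    simpa [two_mul] using hU' (h * j + z) (h * j - z)⟩
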